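/- Let L : ℝ^n × ℝ^m → ℝ be a C² convex-concave function that has at least one equilibrium (a point where ∇L = 0) and whose Hessian ∇²L is invertible at every equilibrium (so that the equilibrium (x*, y*) is unique). For λ > 0 define L'_λ(x,y) = L(x,y) + (λ/2)‖x‖² − (λ/2)‖y‖². Then for every ε > 0 there exists λ₀ > 0 such that for all λ ∈ (0, λ₀), L'_λ has an equilibrium (a point where ∇L'_λ = 0) lying within distance ε of (x*, y*). -/

import Mathlib

/-- The regularized utility `L'_λ(x,y) = L(x,y) + (λ/2)‖x‖² − (λ/2)‖y‖²`. -/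
noncomputable def Lreg {n m : ℕ}
    (L : EuclideanSpace ℝ (Fin n) × EuclideanSpace ℝ (Fin m) → ℝ) (lam : ℝ)
    (z : EuclideanSpace ℝ (Fin n) × EuclideanSpace ℝ (Fin m)) : ℝ :=
  L z + lam / 2 * ‖z.1‖ ^ 2 - lam / 2 * ‖z.2‖ ^ 2

/-!
Equilibria of the regularized utility are the solutions `z` of `∇L'_λ(z) = 0`. At `λ = 0` this
equation holds at the equilibrium of `L`, and its partial derivative in `z` there is the invertible
Hessian, so the implicit function theorem yields a `C¹` branch `λ ↦ z(λ)` of equilibria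
starting at the equilibrium of `L`.
-/

open Filter Topology
open scoped ContDiff

section Calculus

variable {𝕜 : Type*} [NontriviallyNormedField 𝕜]
  {P : Type*} [NormedAddCommGroup P] [NormedSpace 𝕜 P]
  {E : Type*} [NormedAddCommGroup E] [NormedSpace 𝕜 E]
  {F : Type*} [NormedAddCommGroup F] [NormedSpace 𝕜 F]

lemma isInvertible_of_bijective [CompleteSpace E] [CompleteSpace F] {A : E →L[𝕜] F}
    (hA : Function.Bijective A) : A.IsInvertible :=
  ⟨.ofBijective A (LinearMap.ker_eq_bot.2 hA.1) (LinearMap.range_eq_top.2 hA.2),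
    ContinuousLinearEquiv.coe_ofBijective ..⟩

lemma hasFDerivAt_comp_prodMk_right {g : P × E → F} {p : P} {x : E}
    (hg : DifferentiableAt 𝕜 g (p, x)) :
    HasFDerivAt (fun y ↦ g (p, y)) (fderiv 𝕜 g (p, x) ∘L .inr 𝕜 P E) x :=
  hg.hasFDerivAt.comp x (hasFDerivAt_prodMk_right p x)

lemma contDiffAt_partial_fderiv {m n : ℕ∞ω} {f : P → E → F} {q₀ : P × E}
    (hf : ContDiffAt 𝕜 n (Function.uncurry f) q₀) (hmn : m + 1 ≤ n) :
    ContDiffAt 𝕜 m (fun q : P × E ↦ fderiv 𝕜 (f q.1) q.2) q₀ := by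
  have hf' : ContDiffAt 𝕜 n (Function.uncurry fun q : P × E ↦ f q.1) (q₀, q₀.2) :=
    hf.comp (q₀, q₀.2) (contDiffAt_fst.fst.prodMk contDiffAt_snd)
  exact hf'.fderiv contDiffAt_snd hmn

end Calculus

theorem exists_contDiffAt_eventually_hasFDerivAt_zero {𝕜 : Type*} [RCLike 𝕜]
    {P : Type*} [NormedAddCommGroup P] [NormedSpace 𝕜 P] [CompleteSpace P]
    {E : Type*} [NormedAddCommGroup E] [NormedSpace 𝕜 E] [CompleteSpace E]
    {m n : ℕ∞ω} {f : P → E → 𝕜} {p₀ : P} {x₀ : E}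
    (hf : ContDiffAt 𝕜 n (Function.uncurry f) (p₀, x₀)) (hm : m ≠ 0) (hmn : m + 1 ≤ n)
    (hcrit : fderiv 𝕜 (f p₀) x₀ = 0)
    (hhess : Function.Bijective (fderiv 𝕜 (fderiv 𝕜 (f p₀)) x₀)) :
    ∃ ψ : P → E, ψ p₀ = x₀ ∧ ContDiffAt 𝕜 m ψ p₀ ∧
      ∀ᶠ p in 𝓝 p₀, HasFDerivAt (f p) (0 : E →L[𝕜] 𝕜) (ψ p) := by
  set G : P × E → E →L[𝕜] 𝕜 := fun q ↦ fderiv 𝕜 (f q.1) q.2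
  have hG : ContDiffAt 𝕜 m G (p₀, x₀) := contDiffAt_partial_fderiv hf hmn
  have hGinv : (fderiv 𝕜 G (p₀, x₀) ∘L .inr 𝕜 P E).IsInvertible := by
    rw [← (hasFDerivAt_comp_prodMk_right (hG.differentiableAt hm)).fderiv]
    exact isInvertible_of_bijective hhess
  set ψ := hG.implicitFunction hm hGinv
  have hψ₀ : ψ p₀ = x₀ := hG.implicitFunction_apply_self hm hGinv
  have hψ : ContDiffAt 𝕜 m ψ p₀ := hG.contDiffAt_implicitFunction hm hGinv
  have hgraph : Tendsto (fun p ↦ (p, ψ p)) (𝓝 p₀) (𝓝 (p₀, x₀)) :=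
    tendsto_id.prodMk_nhds (hψ₀ ▸ hψ.continuousAt.tendsto)
  have hf₁ : ContDiffAt 𝕜 1 (Function.uncurry f) (p₀, x₀) := hf.of_le (le_add_self.trans hmn)
  refine ⟨ψ, hψ₀, hψ, ?_⟩
  filter_upwards [hG.eventually_apply_implicitFunction hm hGinv,
    hgraph.eventually (hf₁.eventually (by decide))] with p hGp hfp
  have hdiff : DifferentiableAt 𝕜 (f p) (ψ p) :=
    (hasFDerivAt_comp_prodMk_right (hfp.differentiableAt one_ne_zero)).differentiableAt
  have hzero : fderiv 𝕜 (f p) (ψ p) = 0 := hGp.trans hcrit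
  exact hzero ▸ hdiff.hasFDerivAt

section Regularization

variable {E F : Type*} [NormedAddCommGroup E] [InnerProductSpace ℝ E]
  [NormedAddCommGroup F] [InnerProductSpace ℝ F] {L : E × F → ℝ} {z₀ : E × F}

lemma contDiffAt_uncurry_regularization {n : ℕ∞ω} (hL : ContDiffAt ℝ n L z₀) (lam₀ : ℝ) :
    ContDiffAt ℝ n (Function.uncurry fun (lam : ℝ) (z : E × F) ↦
      L z + lam / 2 * ‖z.1‖ ^ 2 - lam / 2 * ‖z.2‖ ^ 2) (lam₀, z₀) := by
  have hlam : ContDiffAt ℝ n (fun q : ℝ × E × F ↦ q.1 / 2) (lam₀, z₀) :=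
    contDiffAt_fst.div_const 2
  exact ((hL.comp (lam₀, z₀) contDiffAt_snd).add
    (hlam.mul (contDiffAt_snd.fst.norm_sq ℝ))).sub (hlam.mul (contDiffAt_snd.snd.norm_sq ℝ))

theorem regularization_perturbs_equilibrium_general [CompleteSpace E] [CompleteSpace F]
    (hL : ContDiffAt ℝ 2 L z₀) (hcrit : fderiv ℝ L z₀ = 0)
    (hhess : Function.Bijective (fderiv ℝ (fderiv ℝ L) z₀)) :
    ∀ ε > 0, ∃ lam₀ > 0, ∀ lam : ℝ, |lam| < lam₀ →
      ∃ z, HasFDerivAt (fun z : E × F ↦ L z + lam / 2 * ‖z.1‖ ^ 2 - lam / 2 * ‖z.2‖ ^ 2)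
        (0 : E × F →L[ℝ] ℝ) z ∧ dist z z₀ ≤ ε := by
  intro ε hε
  have hL₀ : (fun z : E × F ↦ L z + 0 / 2 * ‖z.1‖ ^ 2 - 0 / 2 * ‖z.2‖ ^ 2) = L := by simp
  obtain ⟨ψ, hψ₀, hψ, hψcrit⟩ := exists_contDiffAt_eventually_hasFDerivAt_zero
    (contDiffAt_uncurry_regularization hL 0) one_ne_zero one_add_one_eq_two.le
    (hL₀.symm ▸ hcrit) (hL₀.symm ▸ hhess)
  have hψclose : ∀ᶠ lam in 𝓝 0, dist (ψ lam) z₀ ≤ ε :=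
    (hψ₀ ▸ hψ.continuousAt.tendsto : Tendsto ψ (𝓝 0) (𝓝 z₀)).eventually
      (Metric.closedBall_mem_nhds z₀ hε)
  obtain ⟨lam₀, hlam₀, hball⟩ := Metric.eventually_nhds_iff.1 (hψcrit.and hψclose)
  exact ⟨lam₀, hlam₀, fun lam hlam ↦ ⟨ψ lam, hball (by rwa [Real.dist_0_eq_abs])⟩⟩

end Regularization

/-- **Small regularization perturbs the equilibrium only slightly:** if the `C²`
convex-concave `L` has an equilibrium and invertible Hessian at every equilibrium, then
for every `ε > 0` and all small enough `λ > 0` the regularized utility `L'_λ` has an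
equilibrium within distance `ε` of the (unique) equilibrium of `L`. -/
theorem regularization_perturbs_equilibrium
    {n m : ℕ} (L : EuclideanSpace ℝ (Fin n) × EuclideanSpace ℝ (Fin m) → ℝ)
    (hL : ContDiff ℝ 2 L)
    (hconv : ∀ y, ConvexOn ℝ Set.univ fun x => L (x, y))
    (hconc : ∀ x, ConcaveOn ℝ Set.univ fun y => L (x, y))
    (xstar : EuclideanSpace ℝ (Fin n)) (ystar : EuclideanSpace ℝ (Fin m))
    (heq : fderiv ℝ L (xstar, ystar) = 0)
    (hhess : ∀ z, fderiv ℝ L z = 0 → Function.Bijective (fderiv ℝ (fderiv ℝ L) z)) :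
    ∀ ε > 0, ∃ lam₀ > 0, ∀ lam ∈ Set.Ioo (0:ℝ) lam₀,
      ∃ z, fderiv ℝ (Lreg L lam) z = 0 ∧ dist z (xstar, ystar) ≤ ε := by
  intro ε hε
  obtain ⟨lam₀, hlam₀, h⟩ :=
    regularization_perturbs_equilibrium_general hL.contDiffAt heq (hhess _ heq) ε hε
  exact ⟨lam₀, hlam₀, fun lam hlam ↦ (h lam ((abs_of_pos hlam.1).trans_lt hlam.2)).imp
    fun _ hz ↦ ⟨hz.1.fderiv, hz.2⟩⟩
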